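/- Let P be a finite set and F : 2^P → ℝ normalized, monotone and submodular. Let α ≥ 1, let S_1, S_2 ⊆ P be disjoint with |S_1| = α, and suppose F({a}) ≥ F({b}) for every a ∈ S_1 and b ∈ S_2. Then for every A ⊆ S_1 ∪ S_2 with |A| ≤ α, F((S_1 ∪ S_2) \ A) ≥ F(S_2)/(α + 1). -/

import Mathlib

/-!
If the attack `A` does not remove all of `S₁`, then some survivor `a ∈ S₁` is worth at least as
much as each lost path of `S₂`. Both `F {a}` and `F (S₂ \ A)` are at most the remaining reward `R`,
so adding the at most `α` lost paths back to `S₂ \ A` one by one gives `F S₂ ≤ R + α R`.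
Otherwise `A` exhausts its budget on `S₁`, and `S₂` survives intact.
-/

open scoped Finset

section SetFunction

variable {P M : Type*} [DecidableEq P]

/-- Submodularity of a set function, in its lattice form on unions and intersections. -/
def IsSubmodular [Add M] [LE M] (F : Finset P → M) : Prop :=
  ∀ A B, F (A ∪ B) + F (A ∩ B) ≤ F A + F B

/-- Subadditivity of a set function, which lets lost paths be added back one at a time. The sets
`A` and `B` are not required to be disjoint. -/
def IsSubadditive [Add M] [LE M] (F : Finset P → M) : Prop :=
  ∀ A B, F (A ∪ B) ≤ F A + F B

variable [AddCommMonoid M] [Preorder M] [IsOrderedAddMonoid M] {F : Finset P → M}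

theorem IsSubmodular.isSubadditive (hF : IsSubmodular F) (hnonneg : ∀ A, 0 ≤ F A) :
    IsSubadditive F :=
  fun A B => (le_add_of_nonneg_right (hnonneg (A ∩ B))).trans (hF A B)

theorem IsSubadditive.union_le_add_sum_singleton (hF : IsSubadditive F) (B T : Finset P) :
    F (B ∪ T) ≤ F B + ∑ t ∈ T, F {t} := by
  induction T using Finset.induction_on with
  | empty => simp
  | insert x T hx ih =>
    calc F (B ∪ insert x T) = F ({x} ∪ (B ∪ T)) := by
          rw [Finset.union_insert, Finset.insert_eq]
      _ ≤ F {x} + F (B ∪ T) := hF _ _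
      _ ≤ F {x} + (F B + ∑ t ∈ T, F {t}) := by gcongr
      _ = F B + ∑ t ∈ insert x T, F {t} := by
          rw [Finset.sum_insert hx, add_left_comm]

theorem IsSubadditive.le_sdiff_add_card_nsmul (hF : IsSubadditive F) {A T : Finset P} {c : M}
    (hc : ∀ t ∈ T ∩ A, F {t} ≤ c) : F T ≤ F (T \ A) + #(T ∩ A) • c :=
  calc F T = F (T \ A ∪ T ∩ A) := by rw [Finset.sdiff_union_inter]
    _ ≤ F (T \ A) + ∑ t ∈ T ∩ A, F {t} := hF.union_le_add_sum_singleton _ _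
    _ ≤ F (T \ A) + #(T ∩ A) • c := by
        gcongr
        exact Finset.sum_le_card_nsmul _ _ _ hc

theorem remaining_reward_alpha_plus_one_bound_general (hF0 : 0 ≤ F ∅) (hmono : Monotone F)
    (hsub : IsSubadditive F) {α : ℕ} {S₁ S₂ A : Finset P} (hdisj : Disjoint S₁ S₂)
    (hS₁ : α ≤ #S₁) (hord : ∀ a ∈ S₁, ∀ b ∈ S₂, F {b} ≤ F {a}) (hA : #A ≤ α) :
    F S₂ ≤ (α + 1) • F ((S₁ ∪ S₂) \ A) := by
  set R := F ((S₁ ∪ S₂) \ A) with hR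
  have hR_nonneg : 0 ≤ R := hF0.trans (hmono (Finset.empty_subset _))
  by_cases hS₁A : S₁ ⊆ A
  · obtain rfl : S₁ = A := Finset.eq_of_subset_of_card_le hS₁A (hA.trans hS₁)
    have hR_eq : R = F S₂ := by rw [hR, Finset.union_sdiff_cancel_left hdisj]
    exact hR_eq ▸ le_self_nsmul hR_nonneg α.succ_ne_zero
  · obtain ⟨a, haS₁, haA⟩ := Finset.not_subset.mp hS₁A
    have ha_le : F {a} ≤ R := hmono (by simp [haS₁, haA])
    have hlost_le : ∀ b ∈ S₂ ∩ A, F {b} ≤ R := fun b hb =>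
      (hord a haS₁ b (Finset.mem_of_mem_inter_left hb)).trans ha_le
    have hcard : #(S₂ ∩ A) ≤ α := (Finset.card_le_card Finset.inter_subset_right).trans hA
    calc F S₂ ≤ F (S₂ \ A) + #(S₂ ∩ A) • R := hsub.le_sdiff_add_card_nsmul hlost_le
      _ ≤ R + α • R := by
          gcongr
          exact hmono (Finset.sdiff_subset_sdiff Finset.subset_union_right subset_rfl)
      _ = (α + 1) • R := (succ_nsmul' R α).symm

end SetFunction

/-- After any removal of at most `α` paths, the remaining reward is at
least `F(S_2) / (α + 1)`. -/
theorem remaining_reward_alpha_plus_one_bound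
    {P : Type*} [Fintype P] [DecidableEq P]
    (F : Finset P → ℝ)
    (hF0 : F ∅ = 0)
    (hFmono : ∀ A B : Finset P, A ⊆ B → F A ≤ F B)
    (hFsub : ∀ A B : Finset P, F A + F B ≥ F (A ∪ B) + F (A ∩ B))
    (α : ℕ) (hα : 1 ≤ α)
    (S1 S2 : Finset P) (hdisj : Disjoint S1 S2) (hS1card : S1.card = α)
    (hord : ∀ a ∈ S1, ∀ b ∈ S2, F {a} ≥ F {b}) :
    ∀ A ⊆ S1 ∪ S2, A.card ≤ α → F ((S1 ∪ S2) \ A) ≥ F S2 / ((α : ℝ) + 1) := by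
  intro A _ hA
  have hsub : IsSubadditive F :=
    IsSubmodular.isSubadditive hFsub fun A => hF0.ge.trans (hFmono ∅ A A.empty_subset)
  have hbound := remaining_reward_alpha_plus_one_bound_general hF0.ge hFmono hsub hdisj
    hS1card.ge hord hA
  rw [ge_iff_le, div_le_iff₀' (by positivity)]
  simpa only [nsmul_eq_mul, Nat.cast_add_one] using hbound
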